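/- (Gauge shift by an invariant primitive) Let (f_1,…,f_n) be a homotopy moment map for ω and let α ∈ Ω^n be invariant (𝓛_{v_x}α = 0 for all x ∈ 𝔤). Then ω + dα satisfies d(ω + dα) = 0 and 𝓛_{v_x}(ω + dα) = 0 for all x ∈ 𝔤, and the maps f'_k := f_k + (−1)^{k−1}·ς(k)·α_k (k = 1,…,n) form a homotopy moment map for ω + dα. -/

import Mathlib

/-- Cartan calculus data over ℝ: a module `carrier` with graded pieces `deg i`
(`deg i = ⊥` for `i < 0`), a degree-`+1` differential `d` squaring to zero,
a real Lie algebra `X`, contractions `ι v` of degree `-1` depending linearly on `v`,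
pairwise anticommuting, and satisfying the Cartan relation
`𝓛_v ∘ ι_w - ι_w ∘ 𝓛_v = ι_[v,w]` where `𝓛_v = d ∘ ι_v + ι_v ∘ d`. -/
structure CartanCalculus where
  carrier : Type
  [addCommGroup : AddCommGroup carrier]
  [module : Module ℝ carrier]
  deg : ℤ → Submodule ℝ carrier
  deg_neg : ∀ i : ℤ, i < 0 → deg i = ⊥
  d : carrier →ₗ[ℝ] carrier
  d_deg : ∀ i : ℤ, ∀ a ∈ deg i, d a ∈ deg (i + 1)
  d_d : ∀ a : carrier, d (d a) = 0
  X : Type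
  [lieRingX : LieRing X]
  [lieAlgebraX : LieAlgebra ℝ X]
  ι : X →ₗ[ℝ] carrier →ₗ[ℝ] carrier
  ι_deg : ∀ (v : X) (i : ℤ), ∀ a ∈ deg i, ι v a ∈ deg (i - 1)
  ι_ι : ∀ (v w : X) (a : carrier), ι v (ι w a) = - ι w (ι v a)
  cartan : ∀ (v w : X) (a : carrier),
      (d (ι v (ι w a)) + ι v (d (ι w a))) - ι w (d (ι v a) + ι v (d a)) = ι ⁅v, w⁆ a

attribute [instance] CartanCalculus.addCommGroup CartanCalculus.module
  CartanCalculus.lieRingX CartanCalculus.lieAlgebraX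

namespace CartanCalculus

/-- The Lie derivative `𝓛_v = d ∘ ι_v + ι_v ∘ d`. -/
def L (C : CartanCalculus) (v : C.X) : C.carrier →ₗ[ℝ] C.carrier :=
  C.d ∘ₗ C.ι v + C.ι v ∘ₗ C.d

/-- Iterated contraction: `iotaL [v₁, …, v_k] = ι_{v_k} ∘ ⋯ ∘ ι_{v₁}`, i.e. the
contraction `ι(v₁ ∧ ⋯ ∧ v_k)` (`ι_{v₁}` acts first). -/
def iotaL (C : CartanCalculus) : List C.X → C.carrier →ₗ[ℝ] C.carrier
  | [] => LinearMap.id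
  | v :: vs => (C.iotaL vs).comp (C.ι v)

end CartanCalculus

/-- Interpret a list as a `Fin k`-tuple (junk value `0` out of range). -/
def listToFun {α : Type} [Zero α] (k : ℕ) (l : List α) : Fin k → α :=
  fun m => l.getD m.val 0

/-- A map `𝔤^k → W` is multilinear. -/
def IsMultilinear {𝔤 : Type} [AddCommGroup 𝔤] [Module ℝ 𝔤] {W : Type}
    [AddCommGroup W] [Module ℝ W] {k : ℕ} (ψ : (Fin k → 𝔤) → W) : Prop :=
  ∀ (x : Fin k → 𝔤) (i : Fin k),
    (∀ a b : 𝔤, ψ (Function.update x i (a + b))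
        = ψ (Function.update x i a) + ψ (Function.update x i b)) ∧
    (∀ (c : ℝ) (a : 𝔤), ψ (Function.update x i (c • a)) = c • ψ (Function.update x i a))

/-- A map `𝔤^k → W` is alternating. -/
def IsAlternating {𝔤 : Type} {W : Type} [AddCommGroup W] {k : ℕ}
    (ψ : (Fin k → 𝔤) → W) : Prop :=
  ∀ (x : Fin k → 𝔤) (i j : Fin k), i ≠ j → x i = x j → ψ x = 0

/-- The Chevalley–Eilenberg differential of a `k`-cochain `ψ`:
`(d_𝔤 ψ)(x₁,…,x_{k+1}) = Σ_{i<j} (-1)^{i+j} ψ([x_i,x_j], x₁, …, x̂_i, …, x̂_j, …, x_{k+1})`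
(signs written for 1-based indices, as in the paper). -/
def dCE {𝔤 : Type} [LieRing 𝔤] [LieAlgebra ℝ 𝔤] {W : Type} [AddCommGroup W]
    [Module ℝ W] (k : ℕ) (ψ : (Fin k → 𝔤) → W) : (Fin (k + 1) → 𝔤) → W :=
  fun x => ∑ i : Fin (k + 1), ∑ j : Fin (k + 1),
    if (i : ℕ) < (j : ℕ) then
      ((-1 : ℝ) ^ ((i : ℕ) + (j : ℕ))) •
        ψ (listToFun k (⁅x i, x j⁆ :: (((List.ofFn x).eraseIdx (j : ℕ)).eraseIdx (i : ℕ))))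
    else 0

namespace CartanCalculus

/-- `σ_k(x₁,…,x_k) = ι(v_{x₁} ∧ ⋯ ∧ v_{x_k}) σ` where `v_x = ρ x`. -/
def lower (C : CartanCalculus) {𝔤 : Type} [LieRing 𝔤] [LieAlgebra ℝ 𝔤]
    (ρ : 𝔤 →ₗ⁅ℝ⁆ C.X) (k : ℕ) (σ : C.carrier) : (Fin k → 𝔤) → C.carrier :=
  fun x => C.iotaL (List.ofFn (fun i => ρ (x i))) σ

/-- `F_k(x₁,…,x_k) = ι(v_{x₁} ∧ ⋯ ∧ v_{x_{k-1}}) (F x_k)`, with `F₀ := 0`. -/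
def lowerF (C : CartanCalculus) {𝔤 : Type} [LieRing 𝔤] [LieAlgebra ℝ 𝔤]
    (ρ : 𝔤 →ₗ⁅ℝ⁆ C.X) (F : 𝔤 → C.carrier) : (k : ℕ) → (Fin k → 𝔤) → C.carrier
  | 0 => fun _ => 0
  | (k + 1) => fun x =>
      C.iotaL (List.ofFn (fun i : Fin k => ρ (x i.castSucc))) (F (x (Fin.last k)))

end CartanCalculus

/-- `ς(k) = -(-1)^{k(k+1)/2}`. -/
def varsigma (k : ℕ) : ℝ := -((-1 : ℝ) ^ (k * (k + 1) / 2))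

/-- A homotopy moment map for the invariant closed form `ω ∈ Ω^{n+1}`
(componentwise form of Def. 5.1 in [FRZ]): a family of alternating multilinear maps
`f_k : 𝔤^k → Ω^{n-k}` (`k = 1, …, n`) satisfying the moment map equations. -/
def IsMomentMap (C : CartanCalculus) {𝔤 : Type} [LieRing 𝔤] [LieAlgebra ℝ 𝔤]
    (ρ : 𝔤 →ₗ⁅ℝ⁆ C.X) (n : ℕ) (ω : C.carrier)
    (f : (k : ℕ) → (Fin k → 𝔤) → C.carrier) : Prop :=
  (∀ k : ℕ, 1 ≤ k → k ≤ n →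
      IsMultilinear (f k) ∧ IsAlternating (f k) ∧ ∀ x, f k x ∈ C.deg ((n : ℤ) - (k : ℤ))) ∧
  (∀ x : 𝔤, C.d (f 1 (fun _ => x)) = - C.ι (ρ x) ω) ∧
  (∀ k : ℕ, 2 ≤ k → k ≤ n → ∀ x : Fin k → 𝔤,
      (∑ i : Fin k, ∑ j : Fin k,
        if (i : ℕ) < (j : ℕ) then
          ((-1 : ℝ) ^ ((i : ℕ) + (j : ℕ) + 1)) •
            f (k - 1) (listToFun (k - 1)
              (⁅x i, x j⁆ :: (((List.ofFn x).eraseIdx (j : ℕ)).eraseIdx (i : ℕ))))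
        else 0)
      = C.d (f k x) + varsigma k • C.lower ρ k ω x) ∧
  (∀ x : Fin (n + 1) → 𝔤,
      (∑ i : Fin (n + 1), ∑ j : Fin (n + 1),
        if (i : ℕ) < (j : ℕ) then
          ((-1 : ℝ) ^ ((i : ℕ) + (j : ℕ) + 1)) •
            f n (listToFun n
              (⁅x i, x j⁆ :: (((List.ofFn x).eraseIdx (j : ℕ)).eraseIdx (i : ℕ))))
        else 0)
      = varsigma (n + 1) • C.lower ρ (n + 1) ω x)

/-- Iterated contraction lowers the degree by the number of vectors. -/
lemma CartanCalculus.iotaL_deg (C : CartanCalculus) (l : List C.X) (i : ℤ)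
    (a : C.carrier) (ha : a ∈ C.deg i) :
    C.iotaL l a ∈ C.deg (i - (l.length : ℤ)) := by
  induction l generalizing i a with
  | nil => simpa [CartanCalculus.iotaL] using ha
  | cons v vs ih =>
      have h1 : C.ι v a ∈ C.deg (i - 1) := C.ι_deg v i a ha
      have h2 := ih (i - 1) (C.ι v a) h1
      have heq : i - 1 - (vs.length : ℤ) = i - ((v :: vs).length : ℤ) := by
        simp only [List.length_cons]
        push_cast
        ring
      have h3 : C.iotaL (v :: vs) a = C.iotaL vs (C.ι v a) := rfl
      rw [h3, ← heq]
      exact h2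

/-- The full contraction of `ω ∈ Ω^{n+1}` by `n+1` vectors lands in `Ω^0`. -/
lemma CartanCalculus.lower_mem_deg_zero (C : CartanCalculus) {𝔤 : Type} [LieRing 𝔤]
    [LieAlgebra ℝ 𝔤] (ρ : 𝔤 →ₗ⁅ℝ⁆ C.X) (n : ℕ) (ω : C.carrier)
    (hω : ω ∈ C.deg ((n : ℤ) + 1)) (x : Fin (n + 1) → 𝔤) :
    C.lower ρ (n + 1) ω x ∈ C.deg 0 := by
  have h := C.iotaL_deg (List.ofFn (fun i => ρ (x i))) ((n : ℤ) + 1) ω hω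
  have heq : (n : ℤ) + 1 - ((List.ofFn (fun i : Fin (n + 1) => ρ (x i))).length : ℤ)
      = 0 := by
    simp
  show C.iotaL (List.ofFn (fun i => ρ (x i))) ω ∈ C.deg 0
  rw [← heq]
  exact h

/-- The cochain `c : 𝔤^{n+1} → ℝ`, `c(x₁,…,x_{n+1}) = ε(ι(v_{x₁}∧⋯∧v_{x_{n+1}})ω)`,
i.e. `(-1)^n ω_{n+1}` evaluated by `ε : Ω^0 → ℝ` (without the sign). -/
def obstructionCocycle (C : CartanCalculus) {𝔤 : Type} [LieRing 𝔤] [LieAlgebra ℝ 𝔤]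
    (ρ : 𝔤 →ₗ⁅ℝ⁆ C.X) (n : ℕ) (ω : C.carrier) (hω : ω ∈ C.deg ((n : ℤ) + 1))
    (ε : C.deg 0 →ₗ[ℝ] ℝ) : (Fin (n + 1) → 𝔤) → ℝ :=
  fun x => ε ⟨C.lower ρ (n + 1) ω x, C.lower_mem_deg_zero ρ n ω hω x⟩

/-!
Up to the sign `ς(k + 1)`, the shift of `f_k` is `α_k`, and moment maps add: if `f` and `g` are
moment maps for `ω` and `ω'`, then `f + g` is one for `ω + ω'`. So the claim is that the shifts
alone form a moment map for `dα`. This follows from the extended Cartan formula for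
`d (ι(v₁ ∧ ⋯ ∧ v_k) α)`, whose Lie derivative terms vanish because `α` is invariant; the top
equation is the same formula, with `α_{n+1} = 0` for degree reasons.
-/

lemma listToFun_cons {α : Type} [Zero α] (k : ℕ) (a : α) (l : List α) :
    listToFun (k + 1) (a :: l) = Fin.cons a (listToFun k l) := by
  funext m
  cases m using Fin.cases <;> rfl

lemma listToFun_ofFn_eraseIdx {α : Type} [Zero α] {k : ℕ} (x : Fin (k + 1) → α)
    (i : Fin (k + 1)) : listToFun k ((List.ofFn x).eraseIdx i) = i.removeNth x := by
  funext m
  simp only [listToFun, Fin.removeNth, Fin.succAbove, List.getD_eq_getElem?_getD,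
    List.getElem?_eraseIdx, Fin.lt_def, Fin.val_castSucc]
  split_ifs <;> simp [Fin.castSucc, Fin.succ, Fin.castAdd, Fin.castLE, -List.ofFn_succ]

lemma varsigma_succ (k : ℕ) : varsigma (k + 1) = (-1 : ℝ) ^ (k + 1) * varsigma k := by
  have triangle : (k + 1) * (k + 1 + 1) / 2 = (k + 1) + k * (k + 1) / 2 := by
    rw [show (k + 1) * (k + 1 + 1) = k * (k + 1) + (k + 1) * 2 by ring,
      Nat.add_mul_div_right _ _ two_pos, add_comm]
  rw [varsigma, varsigma, triangle, pow_add, mul_neg]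

lemma neg_one_pow_mul_varsigma {k : ℕ} (hk : 1 ≤ k) :
    (-1 : ℝ) ^ (k - 1) * varsigma k = varsigma (k + 1) := by
  obtain ⟨m, rfl⟩ := Nat.exists_eq_add_of_le' hk
  rw [varsigma_succ (m + 1), Nat.add_sub_cancel]
  ring

section Cochains

variable {𝔤 W : Type} [AddCommGroup W] {k : ℕ} {φ ψ : (Fin k → 𝔤) → W}

lemma IsAlternating.add (hφ : IsAlternating φ) (hψ : IsAlternating ψ) :
    IsAlternating (φ + ψ) := fun x i j hij hx => by
  rw [Pi.add_apply, hφ x i j hij hx, hψ x i j hij hx, add_zero]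

variable [Module ℝ W]

lemma IsAlternating.smul (c : ℝ) (hψ : IsAlternating ψ) : IsAlternating (c • ψ) :=
  fun x i j hij hx => by rw [Pi.smul_apply, hψ x i j hij hx, smul_zero]

lemma IsMultilinear.add [AddCommGroup 𝔤] [Module ℝ 𝔤] (hφ : IsMultilinear φ)
    (hψ : IsMultilinear ψ) : IsMultilinear (φ + ψ) := fun x i =>
  ⟨fun a b => by simp only [Pi.add_apply, (hφ x i).1, (hψ x i).1, add_add_add_comm],
    fun c a => by simp only [Pi.add_apply, (hφ x i).2, (hψ x i).2, smul_add]⟩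

lemma IsMultilinear.smul [AddCommGroup 𝔤] [Module ℝ 𝔤] (c : ℝ) (hψ : IsMultilinear ψ) :
    IsMultilinear (c • ψ) := fun x i =>
  ⟨fun a b => by simp only [Pi.smul_apply, (hψ x i).1, smul_add],
    fun r a => by simp only [Pi.smul_apply, (hψ x i).2, smul_comm c r]⟩

variable [LieRing 𝔤] [LieAlgebra ℝ 𝔤]

lemma dCE_add (φ ψ : (Fin k → 𝔤) → W) : dCE k (φ + ψ) = dCE k φ + dCE k ψ := by
  funext x
  simp only [dCE, Pi.add_apply, smul_add, ← Finset.sum_add_distrib, ← ite_add_zero]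

lemma dCE_smul (c : ℝ) (ψ : (Fin k → 𝔤) → W) : dCE k (c • ψ) = c • dCE k ψ := by
  funext x
  simp only [dCE, Pi.smul_apply, Finset.smul_sum, smul_ite, smul_zero, smul_comm c]

lemma sum_bracket_eq_neg_dCE (ψ : (Fin k → 𝔤) → W) (x : Fin (k + 1) → 𝔤) :
    (∑ i : Fin (k + 1), ∑ j : Fin (k + 1),
      if (i : ℕ) < (j : ℕ) then
        ((-1 : ℝ) ^ ((i : ℕ) + (j : ℕ) + 1)) •
          ψ (listToFun k (⁅x i, x j⁆ :: (((List.ofFn x).eraseIdx (j : ℕ)).eraseIdx (i : ℕ))))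
      else 0) = -dCE k ψ x := by
  simp only [dCE, ← Finset.sum_neg_distrib, pow_succ, mul_neg_one, neg_smul, neg_ite,
    neg_zero]

end Cochains

namespace CartanCalculus

variable (C : CartanCalculus)

lemma ι_ι_self (v : C.X) (a : C.carrier) : C.ι v (C.ι v a) = 0 :=
  have : IsAddTorsionFree C.carrier := .of_isTorsionFree ℝ C.carrier
  self_eq_neg.mp (C.ι_ι v v a)

lemma d_ι (v : C.X) (a : C.carrier) : C.d (C.ι v a) = C.L v a - C.ι v (C.d a) := by
  simp [L]

lemma L_d (v : C.X) (a : C.carrier) : C.L v (C.d a) = C.d (C.L v a) := by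
  simp [L, C.d_d]

lemma L_ι (v w : C.X) (a : C.carrier) :
    C.L v (C.ι w a) = C.ι w (C.L v a) + C.ι ⁅v, w⁆ a := by
  rw [← C.cartan v w a]
  simp [L]

variable {𝔤 : Type} [LieRing 𝔤] [LieAlgebra ℝ 𝔤] (ρ : 𝔤 →ₗ⁅ℝ⁆ C.X)

lemma lower_succ (k : ℕ) (σ : C.carrier) (x : Fin (k + 1) → 𝔤) :
    C.lower ρ (k + 1) σ x = C.lower ρ k (C.ι (ρ (x 0)) σ) (Fin.tail x) := by
  rw [lower, List.ofFn_succ]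
  rfl

lemma lower_cons (k : ℕ) (σ : C.carrier) (y : 𝔤) (x : Fin k → 𝔤) :
    C.lower ρ (k + 1) σ (Fin.cons y x) = C.lower ρ k (C.ι (ρ y) σ) x :=
  C.lower_succ ρ k σ _

lemma lower_one (σ : C.carrier) (x : Fin 1 → 𝔤) : C.lower ρ 1 σ x = C.ι (ρ (x 0)) σ :=
  C.lower_succ ρ 0 σ x

lemma lower_add (k : ℕ) (σ τ : C.carrier) :
    C.lower ρ k (σ + τ) = C.lower ρ k σ + C.lower ρ k τ :=
  funext fun _ => map_add _ σ τ

lemma lower_smul (k : ℕ) (c : ℝ) (σ : C.carrier) : C.lower ρ k (c • σ) = c • C.lower ρ k σ :=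
  funext fun _ => map_smul _ c σ

lemma lower_sub (k : ℕ) (σ τ : C.carrier) :
    C.lower ρ k (σ - τ) = C.lower ρ k σ - C.lower ρ k τ :=
  funext fun _ => map_sub _ σ τ

lemma lower_neg (k : ℕ) (σ : C.carrier) : C.lower ρ k (-σ) = -C.lower ρ k σ :=
  funext fun _ => map_neg _ σ

lemma lower_zero (k : ℕ) : C.lower ρ k 0 = 0 :=
  funext fun _ => map_zero _

lemma lower_mem_deg (k : ℕ) {σ : C.carrier} {N : ℤ} (hσ : σ ∈ C.deg N) (x : Fin k → 𝔤) :
    C.lower ρ k σ x ∈ C.deg (N - k) := by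
  simpa [lower] using C.iotaL_deg (List.ofFn fun i => ρ (x i)) N σ hσ

lemma lower_eq_zero_of_lt {k : ℕ} {σ : C.carrier} {N : ℤ} (hσ : σ ∈ C.deg N) (hk : N < k)
    (x : Fin k → 𝔤) : C.lower ρ k σ x = 0 := by
  have mem := C.lower_mem_deg ρ k hσ x
  rwa [C.deg_neg _ (sub_neg.mpr hk), Submodule.mem_bot] at mem

lemma isMultilinear_lower (k : ℕ) (σ : C.carrier) : IsMultilinear (C.lower ρ k σ) := by
  induction k generalizing σ with
  | zero => exact fun _ i => i.elim0
  | succ k ih =>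
    intro x i
    cases i using Fin.cases with
    | zero =>
      simp only [lower_succ, Function.update_self, Fin.tail_update_zero, map_add, map_smul,
        LinearMap.add_apply, LinearMap.smul_apply, lower_add, lower_smul, Pi.add_apply,
        Pi.smul_apply, implies_true, and_self]
    | succ i =>
      simp only [lower_succ, Function.update_of_ne (Fin.succ_ne_zero i).symm,
        Fin.tail_update_succ]
      exact ih _ _ i

lemma lower_ι_apply_self (k : ℕ) (σ : C.carrier) (x : Fin k → 𝔤) (i : Fin k) :
    C.lower ρ k (C.ι (ρ (x i)) σ) x = 0 := by
  induction k generalizing σ with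
  | zero => exact i.elim0
  | succ k ih =>
    rw [lower_succ]
    cases i using Fin.cases with
    | zero => rw [C.ι_ι_self, lower_zero, Pi.zero_apply]
    | succ i =>
      rw [C.ι_ι, lower_neg, Pi.neg_apply, neg_eq_zero]
      exact ih _ (Fin.tail x) i

lemma isAlternating_lower (k : ℕ) (σ : C.carrier) : IsAlternating (C.lower ρ k σ) := by
  induction k generalizing σ with
  | zero => exact fun _ i => i.elim0
  | succ k ih =>
    intro x i j hij hx
    rw [lower_succ]
    cases i using Fin.cases with
    | zero =>
      obtain ⟨j, rfl⟩ := Fin.exists_succ_eq.mpr hij.symm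
      exact hx ▸ C.lower_ι_apply_self ρ k σ (Fin.tail x) j
    | succ i =>
      cases j using Fin.cases with
      | zero => exact hx ▸ C.lower_ι_apply_self ρ k σ (Fin.tail x) i
      | succ j => exact ih _ _ i j (fun h => hij (congrArg Fin.succ h)) hx

lemma lower_listToFun_cons_cons (k : ℕ) (σ : C.carrier) (y z : 𝔤) (l : List 𝔤) :
    C.lower ρ (k + 2) σ (listToFun (k + 2) (y :: z :: l)) =
      -C.lower ρ (k + 1) (C.ι (ρ z) σ) (listToFun (k + 1) (y :: l)) := by
  simp only [listToFun_cons, lower_cons, C.ι_ι (ρ z), lower_neg, Pi.neg_apply]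

lemma dCE_lower_succ (k : ℕ) (σ : C.carrier) (x : Fin (k + 2) → 𝔤) :
    dCE (k + 1) (C.lower ρ (k + 1) σ) x =
      (∑ j : Fin (k + 1), (-1 : ℝ) ^ ((j : ℕ) + 1) •
        C.lower ρ k (C.ι ⁅ρ (x 0), ρ (x j.succ)⁆ σ) (j.removeNth (Fin.tail x))) -
      dCE k (C.lower ρ k (C.ι (ρ (x 0)) σ)) (Fin.tail x) := by
  rw [dCE, Fin.sum_univ_succ, sub_eq_add_neg, dCE, ← Finset.sum_neg_distrib]
  congr 1
  · rw [Fin.sum_univ_succ]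
    simp [List.ofFn_succ, listToFun_cons, lower_cons, ← listToFun_ofFn_eraseIdx, Fin.tail]
  · refine Finset.sum_congr rfl fun i _ => ?_
    rw [Fin.sum_univ_succ, if_neg (by simp), zero_add, ← Finset.sum_neg_distrib]
    refine Finset.sum_congr rfl fun j _ => ?_
    by_cases hij : (i : ℕ) < j
    · obtain ⟨m, rfl⟩ : ∃ m, k = m + 1 := ⟨k - 1, by omega⟩
      have sign : (-1 : ℝ) ^ ((i : ℕ) + 1 + (j + 1)) = (-1) ^ ((i : ℕ) + j) := by ring
      simp [hij, lower_listToFun_cons_cons, sign, Fin.tail]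
    · simp [hij]

lemma sum_lower_L_succ (k : ℕ) (σ : C.carrier) (x : Fin (k + 2) → 𝔤) :
    ∑ i : Fin (k + 2), (-1 : ℝ) ^ ((i : ℕ) + 1) •
        C.lower ρ (k + 1) (C.L (ρ (x i)) σ) (i.removeNth x) =
      -C.lower ρ (k + 1) (C.L (ρ (x 0)) σ) (Fin.tail x) -
      (∑ j : Fin (k + 1), (-1 : ℝ) ^ ((j : ℕ) + 1) •
        C.lower ρ k (C.ι ⁅ρ (x 0), ρ (x j.succ)⁆ σ) (j.removeNth (Fin.tail x))) -
      ∑ i : Fin (k + 1), (-1 : ℝ) ^ ((i : ℕ) + 1) •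
        C.lower ρ k (C.L (ρ (x i.succ)) (C.ι (ρ (x 0)) σ)) (i.removeNth (Fin.tail x)) := by
  have ι_L (v w : C.X) : C.ι w (C.L v σ) = C.ι ⁅w, v⁆ σ + C.L v (C.ι w σ) := by
    rw [L_ι, ← lie_skew, map_neg, LinearMap.neg_apply]
    abel
  have removeNth_succ_zero (i : Fin (k + 1)) : i.succ.removeNth x 0 = x 0 := rfl
  have tail_removeNth_succ (i : Fin (k + 1)) :
      Fin.tail (i.succ.removeNth x) = i.removeNth (Fin.tail x) := by
    funext m
    simp [Fin.tail, Fin.removeNth]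
  rw [Fin.sum_univ_succ, sub_sub, ← Finset.sum_add_distrib, sub_eq_add_neg,
    ← Finset.sum_neg_distrib]
  congr 1
  · simp [Fin.tail_def]
  · refine Finset.sum_congr rfl fun i _ => ?_
    rw [lower_succ, removeNth_succ_zero, tail_removeNth_succ, ι_L, lower_add, Pi.add_apply,
      ← smul_add, ← neg_smul, Fin.val_succ, pow_succ _ ((i : ℕ) + 1), mul_neg_one]

/-- The induction peels off `x 0`; moving `ι (ρ (x 0))` past the brackets and past the Lie
derivatives produces the same sum of `ι ⁅ρ (x 0), ρ (x j)⁆` terms with opposite signs. -/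
theorem neg_one_pow_smul_d_lower (k : ℕ) (σ : C.carrier) (x : Fin (k + 1) → 𝔤) :
    (-1 : ℝ) ^ (k + 1) • C.d (C.lower ρ (k + 1) σ x) =
      dCE k (C.lower ρ k σ) x +
      (∑ i : Fin (k + 1), (-1 : ℝ) ^ ((i : ℕ) + 1) •
        C.lower ρ k (C.L (ρ (x i)) σ) (i.removeNth x)) +
      C.lower ρ (k + 1) (C.d σ) x := by
  induction k generalizing σ with
  | zero => simp [dCE, C.d_ι, lower, iotaL, neg_add_eq_sub]
  | succ k ih =>
    have step := ih (C.ι (ρ (x 0)) σ) (Fin.tail x)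
    rw [C.d_ι, lower_sub, Pi.sub_apply] at step
    rw [lower_succ, pow_succ, mul_neg_one, neg_smul, step, dCE_lower_succ, sum_lower_L_succ,
      lower_succ _ _ _ (C.d σ)]
    simp only [Fin.tail]
    abel

lemma neg_dCE_lower_of_invariant {α : C.carrier} (hα : ∀ y : 𝔤, C.L (ρ y) α = 0) (k : ℕ)
    (x : Fin (k + 1) → 𝔤) :
    -dCE k (C.lower ρ k α) x =
      (-1 : ℝ) ^ k • C.d (C.lower ρ (k + 1) α x) + C.lower ρ (k + 1) (C.d α) x := by
  have cartan := C.neg_one_pow_smul_d_lower ρ k α x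
  simp only [hα, lower_zero, Pi.zero_apply, smul_zero, Finset.sum_const_zero, add_zero, pow_succ,
    mul_neg_one, neg_smul] at cartan
  rw [eq_sub_of_add_eq cartan.symm]
  abel

end CartanCalculus

section MomentMap

variable {C : CartanCalculus} {𝔤 : Type} [LieRing 𝔤] [LieAlgebra ℝ 𝔤] {ρ : 𝔤 →ₗ⁅ℝ⁆ C.X} {n : ℕ}

lemma isMomentMap_iff_dCE {ω : C.carrier} {f : (k : ℕ) → (Fin k → 𝔤) → C.carrier} :
    IsMomentMap C ρ n ω f ↔
      (∀ k : ℕ, 1 ≤ k → k ≤ n →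
        IsMultilinear (f k) ∧ IsAlternating (f k) ∧ ∀ x, f k x ∈ C.deg ((n : ℤ) - (k : ℤ))) ∧
      (∀ x : 𝔤, C.d (f 1 (fun _ => x)) = -C.ι (ρ x) ω) ∧
      (∀ k : ℕ, 1 ≤ k → k < n → ∀ x : Fin (k + 1) → 𝔤,
        -dCE k (f k) x = C.d (f (k + 1) x) + varsigma (k + 1) • C.lower ρ (k + 1) ω x) ∧
      (∀ x : Fin (n + 1) → 𝔤, -dCE n (f n) x = varsigma (n + 1) • C.lower ρ (n + 1) ω x) := by
  simp only [IsMomentMap, ← sum_bracket_eq_neg_dCE]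
  refine and_congr_right' (and_congr_right' (and_congr_left'
    ⟨fun h k hk hkn => ?_, fun h k hk hkn => ?_⟩))
  · exact h (k + 1) (Nat.succ_le_succ hk) hkn
  · obtain ⟨m, rfl⟩ := Nat.exists_eq_add_of_le' (one_le_two.trans hk)
    exact h m (Nat.le_of_succ_le_succ hk) hkn

lemma IsMomentMap.add {ω₁ ω₂ : C.carrier} {f g : (k : ℕ) → (Fin k → 𝔤) → C.carrier}
    (hf : IsMomentMap C ρ n ω₁ f) (hg : IsMomentMap C ρ n ω₂ g) :
    IsMomentMap C ρ n (ω₁ + ω₂) (fun k => f k + g k) := by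
  rw [isMomentMap_iff_dCE] at hf hg ⊢
  obtain ⟨cochain_f, one_f, mid_f, top_f⟩ := hf
  obtain ⟨cochain_g, one_g, mid_g, top_g⟩ := hg
  refine ⟨fun k hk hkn => ?_, fun x => ?_, fun k hk hkn x => ?_, fun x => ?_⟩
  · obtain ⟨multilinear_f, alternating_f, deg_f⟩ := cochain_f k hk hkn
    obtain ⟨multilinear_g, alternating_g, deg_g⟩ := cochain_g k hk hkn
    exact ⟨multilinear_f.add multilinear_g, alternating_f.add alternating_g,
      fun x => add_mem (deg_f x) (deg_g x)⟩
  · simp only [Pi.add_apply, map_add, one_f, one_g, neg_add]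
  · simp only [dCE_add, Pi.add_apply, neg_add, mid_f k hk hkn, mid_g k hk hkn, map_add,
      C.lower_add, smul_add, add_add_add_comm]
  · simp only [dCE_add, Pi.add_apply, neg_add, top_f, top_g, C.lower_add, smul_add]

theorem isMomentMap_d_of_invariant (hn : 1 ≤ n) {α : C.carrier} (hα : α ∈ C.deg n)
    (hαinv : ∀ x : 𝔤, C.L (ρ x) α = 0) :
    IsMomentMap C ρ n (C.d α)
      (fun k => ((-1 : ℝ) ^ (k - 1) * varsigma k) • C.lower ρ k α) := by
  have neg_dCE_shift (k : ℕ) (hk : 1 ≤ k) (x : Fin (k + 1) → 𝔤) :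
      -dCE k (((-1 : ℝ) ^ (k - 1) * varsigma k) • C.lower ρ k α) x =
        ((-1 : ℝ) ^ k * varsigma (k + 1)) • C.d (C.lower ρ (k + 1) α x) +
          varsigma (k + 1) • C.lower ρ (k + 1) (C.d α) x := by
    rw [neg_one_pow_mul_varsigma hk, dCE_smul, Pi.smul_apply, ← smul_neg,
      C.neg_dCE_lower_of_invariant ρ hαinv, smul_add, smul_smul, mul_comm]
  refine isMomentMap_iff_dCE.mpr ⟨fun k _ _ => ?_, fun x => ?_, fun k hk _ x => ?_, fun x => ?_⟩
  · exact ⟨(C.isMultilinear_lower ρ k α).smul _, (C.isAlternating_lower ρ k α).smul _,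
      fun x => Submodule.smul_mem _ _ (C.lower_mem_deg ρ k hα x)⟩
  · simp [C.lower_one, C.d_ι, hαinv, varsigma]
  · rw [neg_dCE_shift k hk, Pi.smul_apply, map_smul, Nat.add_sub_cancel]
  · rw [neg_dCE_shift n hn, C.lower_eq_zero_of_lt ρ hα (by norm_cast; exact n.lt_succ_self),
      map_zero, smul_zero, zero_add]

end MomentMap

/-- gauge shift by an invariant primitive. If `(f₁,…,f_n)` is
a homotopy moment map for `ω` and `α ∈ Ω^n` is invariant, then `ω + dα` is a
closed invariant form and `f'_k := f_k + (-1)^{k-1} ς(k)·α_k` is a homotopy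
moment map for `ω + dα`. -/
theorem gauge_shift_momentMap (C : CartanCalculus) {𝔤 : Type} [LieRing 𝔤]
    [LieAlgebra ℝ 𝔤] (ρ : 𝔤 →ₗ⁅ℝ⁆ C.X) (n : ℕ) (hn : 1 ≤ n) (ω : C.carrier)
    (hω : ω ∈ C.deg ((n : ℤ) + 1)) (hcl : C.d ω = 0)
    (hinv : ∀ x : 𝔤, C.L (ρ x) ω = 0)
    (f : (k : ℕ) → (Fin k → 𝔤) → C.carrier) (hf : IsMomentMap C ρ n ω f)
    (α : C.carrier) (hα : α ∈ C.deg (n : ℤ)) (hαinv : ∀ x : 𝔤, C.L (ρ x) α = 0) :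
    C.d (ω + C.d α) = 0 ∧
    (∀ x : 𝔤, C.L (ρ x) (ω + C.d α) = 0) ∧
    IsMomentMap C ρ n (ω + C.d α)
      (fun k x => f k x + (((-1 : ℝ) ^ (k - 1)) * varsigma k) • C.lower ρ k α x) := by
  refine ⟨?_, fun x => ?_, hf.add (isMomentMap_d_of_invariant hn hα hαinv)⟩
  · rw [map_add, hcl, C.d_d, add_zero]
  · rw [map_add, hinv, C.L_d, hαinv, map_zero, add_zero]
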